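/- arXiv:0707.0546 — 2 statements merged into one kernel-verified Lean document; each statement's English description precedes it below -/
import Mathlib

section
/- With preference lists that may contain ties, let M be a popular matching. Then every applicant x is matched in M to a job in f(x) ∪ s(x). -/
/-!
Fix a popular matching `M`. Call `y'` weakly reachable in one step from `y` (`Weak`) when `y` is
willing to trade its job for the one held by `y'`, and strictly so (`Strict`) when `y` gains by
the trade. Composing `M` with a permutation that shifts jobs along a simple path of such steps
gives another matching, so popularity forbids

* a weak cycle with a strict step (`no_strict_cycle`);
* a strict start followed by a weak path to a free job (`StrictReach.not_free`);
* a strict start from `z` and a weak path to an applicant of smaller weight (`SPlus.weight_le`);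
* two strict steps, made by `x` and then `z`, on a path to an applicant of weight at most that
  of `z` (`SPlus.no_double`).

On the graph side, let `M_i` be the part of `M` lying in `G_i`. A job that is not critical leads,
by an alternating path, to a job left free by a given matching (`exists_alt_of_not_critical`),
and a matching without augmenting paths is maximum (`isMax_of_no_augmenting`). Such alternating
paths of `G_i` with respect to `M_i` consist of weak steps, since applicants move within `f`.

Suppose an applicant `z` of category `c` is not matched into `f z`, and `M_j` is maximum for
`j < c`. Then `z` strictly prefers the jobs of `f z`, and these are not critical in `G_{c-1}`;
following an alternating path, `z` reaches a job not used by `M_{c-1}`. It is free, or held by an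
applicant of category at least `c`, or held by an applicant of category less than `c` that is
itself not matched into its `f`, to which the argument applies again. Hence no such `z` can be
reached by a path with a strict start (`not_sPlus_of_not_fMatched`). This shows by induction that
every `M_i` is maximum (`restr_isMax`), and applied once more to an applicant `x` that is matched
outside `f x` and worse than `s x` it gives the theorem.
-/


/-- `M` is a matching of the bipartite graph with edge relation `E`. -/
def IsMatchingOn {A J : Type*} (E : A → J → Prop) (M : A → Option J) : Prop :=
  (∀ x p, M x = some p → E x p) ∧ ∀ x y p, M x = some p → M y = some p → x = y

/-- The size (number of matched applicants, i.e. edges) of a matching. -/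
def msize {A J : Type*} [Fintype A] (M : A → Option J) : ℕ :=
  Finset.card (Finset.univ.filter (fun x => (M x).isSome))

/-- `M` is a maximum matching of the graph with edge relation `E`. -/
def IsMaxMatchingOn {A J : Type*} [Fintype A] (E : A → J → Prop)
    (M : A → Option J) : Prop :=
  IsMatchingOn E M ∧ ∀ M', IsMatchingOn E M' → msize M' ≤ msize M

/-- A job `p` is critical if it is matched in every maximum matching. -/
def CriticalJob {A J : Type*} [Fintype A] (E : A → J → Prop) (p : J) : Prop :=
  ∀ M, IsMaxMatchingOn E M → ∃ x, M x = some p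

/-- An applicant `x` is critical if it is matched in every maximum matching. -/
def CriticalApp {A J : Type*} [Fintype A] (E : A → J → Prop) (x : A) : Prop :=
  ∀ M, IsMaxMatchingOn E M → (M x).isSome

/-- The edge relation of the graph `G_i`: edges between applicants of category at
most `i` and the jobs in their sets `f x`. -/
def Gedge {A J : Type*} (cat : A → ℕ) (f : A → Finset J) (i : ℕ)
    (x : A) (p : J) : Prop :=
  cat x ≤ i ∧ p ∈ f x

/-- The rank of the job (if any) that applicant `x` receives in matching `M`;
`⊤` means `x` is unmatched (worse than any job on the list). -/
def mrank {A J : Type*} (r : A → J → ℕ∞) (M : A → Option J) (x : A) : ℕ∞ :=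
  (M x).elim ⊤ (r x)

/-- `M` is a matching of the instance: every applicant is assigned at most one job,
along an edge of `H` (i.e. a job on its list, `r x p < ⊤`), and every job is assigned
to at most one applicant. -/
def IsMatching {A J : Type*} (r : A → J → ℕ∞) (M : A → Option J) : Prop :=
  (∀ x p, M x = some p → r x p < ⊤) ∧ ∀ x y p, M x = some p → M y = some p → x = y

open Classical in
/-- Satisfaction of `M₁` with respect to `M₂`: total weight of applicants who prefer
`M₁` to `M₂` minus the total weight of those who prefer `M₂` to `M₁`. -/
noncomputable def satisfaction {A J : Type*} [Fintype A]
    (r : A → J → ℕ∞) (w : A → ℚ) (M₁ M₂ : A → Option J) : ℚ :=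
  (∑ x, if mrank r M₁ x < mrank r M₂ x then w x else 0)
    - ∑ x, if mrank r M₂ x < mrank r M₁ x then w x else 0

/-- `M₁` is more popular than `M₂`. -/
def MorePopular {A J : Type*} [Fintype A]
    (r : A → J → ℕ∞) (w : A → ℚ) (M₁ M₂ : A → Option J) : Prop :=
  0 < satisfaction r w M₁ M₂

/-- A matching is popular if no matching is more popular than it. -/
def Popular {A J : Type*} [Fintype A]
    (r : A → J → ℕ∞) (w : A → ℚ) (M : A → Option J) : Prop :=
  IsMatching r M ∧ ∀ M', IsMatching r M' → ¬ MorePopular r w M' M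

/-! ### Maximum matchings and alternating paths -/

section Alternating

variable {A J : Type*}

/-- `y'` is matched by `N` to a job adjacent to `y`. -/
def Alt (E : A → J → Prop) (N : A → Option J) (y y' : A) : Prop :=
  ∃ p, N y' = some p ∧ E y p

/-- If `N` matches every neighbour of `Y` to an applicant of `Y`, then the jobs that `N` gives to
`Y` are critical: a matching missing one of them becomes larger when its edges meeting `Y` or
these jobs are replaced by those of `N` at `Y`. -/
lemma critical_of_tight [Fintype A] {E : A → J → Prop} {N : A → Option J}
    (hN : IsMatchingOn E N) (Y : Set A)
    (hE : ∀ y ∈ Y, ∀ p, E y p → ∃ y' ∈ Y, N y' = some p)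
    {y₀ : A} (hy₀ : y₀ ∈ Y) {p : J} (hp : N y₀ = some p) : CriticalJob E p := by
  classical
  intro N' hN'
  by_contra hno
  push Not at hno
  let N₁ : A → Option J := fun y =>
    if y ∈ Y then N y else if ∃ y' ∈ Y, N y' = N' y then none else N' y
  have hN₁ : IsMatchingOn E N₁ := by
    have hcase : ∀ x q, N₁ x = some q → (x ∈ Y ∧ N x = some q) ∨
        (N' x = some q ∧ ∀ v ∈ Y, N v ≠ some q) := by
      intro x q hx
      by_cases hxY : x ∈ Y
      · simp only [N₁, if_pos hxY] at hx
        exact Or.inl ⟨hxY, hx⟩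
      · by_cases hxN : ∃ y' ∈ Y, N y' = N' x
        · simp only [N₁, if_neg hxY, if_pos hxN] at hx
          cases hx
        · simp only [N₁, if_neg hxY, if_neg hxN] at hx
          exact Or.inr ⟨hx, fun v hv hvq => hxN ⟨v, hv, by rw [hvq, hx]⟩⟩
    refine ⟨?_, ?_⟩
    · intro x q hx
      rcases hcase x q hx with h | h
      · exact hN.1 x q h.2
      · exact hN'.1.1 x q h.1
    · intro x y q hx hy
      rcases hcase x q hx with h | h <;> rcases hcase y q hy with h' | h'
      · exact hN.2 x y q h.2 h'.2
      · exact absurd h.2 (h'.2 x h.1)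
      · exact absurd h'.2 (h.2 y h'.1)
      · exact hN'.1.2 x y q h.1 h'.1
  have hle := hN'.2 N₁ hN₁
  -- `φ y` is the applicant of `Y` to which `N` gives the job `N' y`, if there is one.
  have hφ : ∀ y, ∃ z, ((∃ y' ∈ Y, N y' = N' y) → z ∈ Y ∧ N z = N' y) ∧
      ((¬ ∃ y' ∈ Y, N y' = N' y) → z = y) := by
    intro y
    by_cases h : ∃ y' ∈ Y, N y' = N' y
    · obtain ⟨z, hz⟩ := h
      exact ⟨z, fun _ => hz, fun h' => absurd ⟨z, hz⟩ h'⟩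
    · exact ⟨y, fun h' => absurd h' h, fun _ => rfl⟩
  choose φ hφ1 hφ2 using hφ
  have hlt : msize N' < msize N₁ := by
    unfold msize
    have hmem : y₀ ∈ Finset.univ.filter (fun x => (N₁ x).isSome) := by
      simp [N₁, hy₀, hp]
    refine lt_of_le_of_lt ?_ (Finset.card_erase_lt_of_mem hmem)
    refine Finset.card_le_card_of_injOn φ ?_ ?_
    · intro y hy
      simp only [Finset.coe_filter, Finset.mem_univ, true_and, Set.mem_ofPred_eq,
        Option.isSome_iff_exists] at hy
      obtain ⟨q, hq⟩ := hy
      simp only [Finset.coe_erase, Finset.coe_filter, Finset.mem_univ, true_and,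
        Set.mem_sdiff, Set.mem_ofPred_eq, Set.mem_singleton_iff, Option.isSome_iff_exists, N₁]
      by_cases h : ∃ y' ∈ Y, N y' = N' y
      · obtain ⟨h1, h2⟩ := hφ1 y h
        refine ⟨⟨q, by simp [h1, h2, hq]⟩, ?_⟩
        intro h3
        rw [h3, hp] at h2
        exact hno y h2.symm
      · have h1 := hφ2 y h
        have h2 : y ∉ Y := by
          intro hy
          obtain ⟨y', hy', h3⟩ := hE y hy q (hN'.1.1 y q hq)
          exact h ⟨y', hy', by rw [h3, hq]⟩
        rw [h1]
        refine ⟨⟨q, by rw [if_neg h2, if_neg h, hq]⟩, ?_⟩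
        rintro rfl
        exact h2 hy₀
    · intro y hy y' hy' hyy
      simp only [Finset.coe_filter, Finset.mem_univ, true_and, Set.mem_ofPred_eq,
        Option.isSome_iff_exists] at hy hy'
      obtain ⟨q, hq⟩ := hy
      obtain ⟨q', hq'⟩ := hy'
      have hnY : ∀ v q, N' v = some q → (¬ ∃ y' ∈ Y, N y' = N' v) → v ∉ Y := by
        intro v q hq h hv
        obtain ⟨y', hy', h3⟩ := hE v hv q (hN'.1.1 v q hq)
        exact h ⟨y', hy', by rw [h3, hq]⟩
      by_cases h : ∃ v ∈ Y, N v = N' y <;> by_cases h' : ∃ v ∈ Y, N v = N' y'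
      · have h1 := (hφ1 y h).2
        have h2 := (hφ1 y' h').2
        rw [hyy, h2] at h1
        exact hN'.1.2 y y' q hq (by rw [h1, hq])
      · have h1 := (hφ1 y h).1
        rw [hyy, hφ2 y' h'] at h1
        exact absurd h1 (hnY y' q' hq' h')
      · have h1 := (hφ1 y' h').1
        rw [← hyy, hφ2 y h] at h1
        exact absurd h1 (hnY y q hq h)
      · rw [← hφ2 y h, ← hφ2 y' h', hyy]
  exact absurd hle (not_le.mpr hlt)

/-- A non-critical job is connected by an alternating path to a job left free by `N`. -/
lemma exists_alt_of_not_critical [Fintype A] {E : A → J → Prop} {N : A → Option J}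
    (hN : IsMatchingOn E N) {p : J} (hp : ¬ CriticalJob E p) :
    (∀ y, N y ≠ some p) ∨ ∃ y y' q, N y = some p ∧ Relation.ReflTransGen (Alt E N) y y' ∧
      E y' q ∧ ∀ v, N v ≠ some q := by
  by_contra hcon
  push Not at hcon
  obtain ⟨⟨y, hy⟩, h⟩ := hcon
  refine hp (critical_of_tight hN {v | Relation.ReflTransGen (Alt E N) y v} ?_
    (Relation.ReflTransGen.refl : Relation.ReflTransGen (Alt E N) y y) hy)
  · intro v hv q hq
    obtain ⟨u, hu⟩ := h y v q hy hv hq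
    exact ⟨u, Relation.ReflTransGen.tail hv ⟨q, hu, hq⟩, hu⟩

/-- Berge's criterion: a matching without augmenting paths is maximum. -/
lemma isMax_of_no_augmenting [Fintype A] {E : A → J → Prop} {N : A → Option J}
    (hN : IsMatchingOn E N)
    (h : ∀ u y q, N u = none → Relation.ReflTransGen (Alt E N) u y → E y q →
      ∃ v, N v = some q) : IsMaxMatchingOn E N := by
  classical
  refine ⟨hN, fun N' hN' => ?_⟩
  let Z : Set A := {y | ∃ u, N u = none ∧ Relation.ReflTransGen (Alt E N) u y}
  have hZ : ∀ y ∈ Z, ∀ p, E y p → ∃ y' ∈ Z, N y' = some p := by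
    rintro y ⟨u, hu, huy⟩ p hp
    obtain ⟨v, hv⟩ := h u y p hu huy hp
    exact ⟨v, ⟨u, hu, huy.tail ⟨p, hv, hp⟩⟩, hv⟩
  have hZ' : ∀ y ∉ Z, (N y).isSome := by
    intro y hy
    by_contra hn
    exact hy ⟨y, by simpa using hn, .refl⟩
  have hφ : ∀ y, ∃ z, (y ∉ Z → z = y) ∧ (y ∈ Z → ∀ p, N' y = some p → z ∈ Z ∧ N z = some p) := by
    intro y
    by_cases hy : y ∈ Z
    · by_cases hp : ∃ p, N' y = some p
      · obtain ⟨p, hp⟩ := hp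
        obtain ⟨z, hz⟩ := hZ y hy p (hN'.1 y p hp)
        exact ⟨z, fun h => absurd hy h, fun _ q hq => by
          rw [hp] at hq; cases hq; exact hz⟩
      · exact ⟨y, fun _ => rfl, fun _ p h => absurd ⟨p, h⟩ hp⟩
    · exact ⟨y, fun _ => rfl, fun h => absurd h hy⟩
  choose φ hφ1 hφ2 using hφ
  unfold msize
  refine Finset.card_le_card_of_injOn φ ?_ ?_
  · intro y hy
    simp only [Finset.coe_filter, Finset.mem_univ, true_and, Set.mem_ofPred_eq,
        Option.isSome_iff_exists] at hy ⊢
    obtain ⟨p, hp⟩ := hy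
    by_cases hyZ : y ∈ Z
    · exact ⟨p, (hφ2 y hyZ p hp).2⟩
    · rw [hφ1 y hyZ]
      exact Option.isSome_iff_exists.mp (hZ' y hyZ)
  · intro y hy y' hy' hyy
    simp only [Finset.coe_filter, Finset.mem_univ, true_and, Set.mem_ofPred_eq,
        Option.isSome_iff_exists] at hy hy'
    obtain ⟨p, hp⟩ := hy
    obtain ⟨p', hp'⟩ := hy'
    have h4 := hN'.2
    grind

end Alternating

/-! ### Shifting jobs along paths -/

section Shifting

variable {A J : Type*}

/-- `y` may trade its job for the one held by `y'` without loss. -/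
def Weak (r : A → J → ℕ∞) (M : A → Option J) (y y' : A) : Prop :=
  ∃ p, M y' = some p ∧ r y p < ⊤ ∧ r y p ≤ mrank r M y

/-- `y` prefers the job held by `y'` to its own. -/
def Strict (r : A → J → ℕ∞) (M : A → Option J) (y y' : A) : Prop :=
  ∃ p, M y' = some p ∧ r y p < mrank r M y

/-- `z` can be reached from `x` by a strict step followed by weak ones. -/
def SPlus (r : A → J → ℕ∞) (M : A → Option J) (x z : A) : Prop :=
  ∃ x', Strict r M x x' ∧ Relation.ReflTransGen (Weak r M) x' z

lemma Strict.weak {r : A → J → ℕ∞} {M : A → Option J} {y y' : A} (h : Strict r M y y') :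
    Weak r M y y' := by
  obtain ⟨p, hp, h⟩ := h
  exact ⟨p, hp, lt_of_lt_of_le h le_top, h.le⟩

/-- `L` is the vertex set of a simple `R`-path from the given vertex to `b`, and the permutation
maps every vertex of the path to its successor and `b` to the start. -/
inductive PathPerm [DecidableEq A] (R : A → A → Prop) (b : A) :
    A → Finset A → Equiv.Perm A → Prop
  | nil : PathPerm R b b {b} 1
  | cons {a a' : A} {L : Finset A} {π : Equiv.Perm A} (ha : a ∉ L) (h : R a a')
      (hL : PathPerm R b a' L π) : PathPerm R b a (insert a L) (π * Equiv.swap a b)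

lemma PathPerm.restart [DecidableEq A] {R : A → A → Prop} {a b : A} {L : Finset A}
    {π : Equiv.Perm A} (h : PathPerm R b a L π) :
    ∀ v ∈ L, ∃ L' π', PathPerm R b v L' π' := by
  induction h with
  | nil =>
    intro v hv
    rw [Finset.mem_singleton] at hv
    subst hv
    exact ⟨_, _, .nil⟩
  | cons ha h hL ih =>
    intro v hv
    rcases Finset.mem_insert.mp hv with rfl | hv
    · exact ⟨_, _, .cons ha h hL⟩
    · exact ih v hv

lemma exists_pathPerm [DecidableEq A] {R : A → A → Prop} {a b : A}
    (h : Relation.ReflTransGen R a b) : ∃ L π, PathPerm R b a L π := by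
  induction h using Relation.ReflTransGen.head_induction_on with
  | refl => exact ⟨_, _, .nil⟩
  | head h _ ih =>
    rename_i a c _
    obtain ⟨L, π, hL⟩ := ih
    by_cases ha : a ∈ L
    · exact hL.restart a ha
    · exact ⟨_, _, .cons ha h hL⟩

lemma PathPerm.spec [DecidableEq A] {R : A → A → Prop} {a b : A} {L : Finset A}
    {π : Equiv.Perm A} (h : PathPerm R b a L π) :
    π b = a ∧ b ∈ L ∧ (∀ y, y ∉ L → π y = y) ∧ (∀ y, y ≠ b → π y = y ∨ R y (π y)) ∧
      ∀ v ∈ L, Relation.ReflTransGen R a v ∧ Relation.ReflTransGen R v b := by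
  induction h with
  | nil =>
    refine ⟨rfl, by simp, fun _ _ => rfl, fun _ _ => Or.inl rfl, ?_⟩
    intro v hv
    rw [Finset.mem_singleton] at hv
    subst hv
    exact ⟨.refl, .refl⟩
  | cons ha h hL ih =>
    rename_i a a' L π
    obtain ⟨h1, h2, h3, h4, h5⟩ := ih
    have hab : a ≠ b := fun e => ha (e ▸ h2)
    have hfix : ∀ y, y ≠ a → y ≠ b → (π * Equiv.swap a b) y = π y := by
      intro y hya hyb
      rw [Equiv.Perm.mul_apply, Equiv.swap_apply_of_ne_of_ne hya hyb]
    have hab' : Relation.ReflTransGen R a b := by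
      have := (h5 b h2).1
      exact this.head h
    refine ⟨?_, Finset.mem_insert_of_mem h2, ?_, ?_, ?_⟩
    · rw [Equiv.Perm.mul_apply, Equiv.swap_apply_right, h3 a ha]
    · intro y hy
      rw [Finset.mem_insert, not_or] at hy
      rw [hfix y hy.1 (fun e => hy.2 (e ▸ h2)), h3 y hy.2]
    · intro y hy
      by_cases hya : y = a
      · subst hya
        right
        rw [Equiv.Perm.mul_apply, Equiv.swap_apply_left, h1]
        exact h
      · rw [hfix y hya hy]
        exact h4 y hy
    · intro v hv
      rcases Finset.mem_insert.mp hv with rfl | hv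
      · exact ⟨.refl, hab'⟩
      · exact ⟨(h5 v hv).1.head h, (h5 v hv).2⟩

open Classical in
/-- The assignment `M ∘ π`, modified to give `o` to `b`. -/
noncomputable def shift (M : A → Option J) (π : Equiv.Perm A) (b : A) (o : Option J) :
    A → Option J :=
  fun y => if y = b then o else M (π y)

lemma shift_ne (M : A → Option J) (π : Equiv.Perm A) (b : A) (o : Option J) {y : A}
    (h : y ≠ b) : shift M π b o y = M (π y) := if_neg h

lemma shift_self (M : A → Option J) (π : Equiv.Perm A) (b : A) (o : Option J) :
    shift M π b o b = o := if_pos rfl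

lemma shift_strict {r : A → J → ℕ∞} {M : A → Option J} {π : Equiv.Perm A} {b y : A}
    {o : Option J} (h : y ≠ b) (hs : Strict r M y (π y)) :
    mrank r (shift M π b o) y < mrank r M y := by
  obtain ⟨p, hp, h1⟩ := hs
  conv_lhs => rw [mrank, shift_ne _ _ _ _ h, hp]
  exact h1

lemma shift_weak {r : A → J → ℕ∞} {M : A → Option J} {π : Equiv.Perm A} {b y : A}
    {o : Option J} (h : y ≠ b) (hs : π y = y ∨ Weak r M y (π y)) :
    mrank r (shift M π b o) y ≤ mrank r M y := by
  rcases hs with hs | ⟨p, hp, _, h1⟩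
  · conv_lhs => rw [mrank, shift_ne _ _ _ _ h, hs]
    exact le_rfl
  · conv_lhs => rw [mrank, shift_ne _ _ _ _ h, hp]
    exact h1

lemma shift_isMatching {r : A → J → ℕ∞} {M : A → Option J} (hM : IsMatching r M)
    {π : Equiv.Perm A} {b : A} {o : Option J}
    (ho : ∀ q, o = some q → r b q < ⊤ ∧ ∀ y, M y = some q → y = π b)
    (hπ : ∀ y, y ≠ b → π y = y ∨ Weak r M y (π y)) : IsMatching r (shift M π b o) := by
  constructor
  · intro x p hx
    by_cases hxb : x = b
    · subst hxb
      rw [shift_self] at hx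
      exact (ho p hx).1
    · rw [shift_ne _ _ _ _ hxb] at hx
      rcases hπ x hxb with h | ⟨q, hq, h, _⟩
      · rw [h] at hx
        exact hM.1 x p hx
      · rw [hq] at hx
        cases hx
        exact h
  · intro x y p hx hy
    by_cases hxb : x = b <;> by_cases hyb : y = b
    · rw [hxb, hyb]
    · rw [hxb, shift_self] at hx
      rw [shift_ne _ _ _ _ hyb] at hy
      exact absurd (π.injective ((ho p hx).2 _ hy)) hyb
    · rw [hyb, shift_self] at hy
      rw [shift_ne _ _ _ _ hxb] at hx
      exact absurd (π.injective ((ho p hy).2 _ hx)) hxb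
    · rw [shift_ne _ _ _ _ hxb] at hx
      rw [shift_ne _ _ _ _ hyb] at hy
      exact π.injective (hM.2 _ _ p hx hy)

/-- The job `q` can be reached from `z` by a path of trades whose first step is strict. -/
def StrictReach (r : A → J → ℕ∞) (M : A → Option J) (z : A) (q : J) : Prop :=
  r z q < mrank r M z ∨ ∃ b, SPlus r M z b ∧ r b q < ⊤ ∧ r b q ≤ mrank r M b

lemma StrictReach.sPlus {r : A → J → ℕ∞} {M : A → Option J} {z b : A} {q : J} (h : StrictReach r M z q) (hb : M b = some q) :
    SPlus r M z b := by
  rcases h with h | ⟨v, ⟨z', h1, h2⟩, h3, h4⟩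
  · exact ⟨b, ⟨q, hb, h⟩, .refl⟩
  · exact ⟨z', h1, h2.tail ⟨q, hb, h3, h4⟩⟩

variable [Fintype A]

/-- Popularity against a matching in which only `b` can be worse off: the applicants of a set `D`
that gain weigh no more than `b` loses. -/
lemma Popular.sum_le {r : A → J → ℕ∞} {w : A → ℚ} {M M' : A → Option J}
    (hpop : Popular r w M) (hpos : ∀ x, 0 < w x) (hM' : IsMatching r M') (b : A)
    (hweak : ∀ y, y ≠ b → mrank r M' y ≤ mrank r M y) (D : Finset A)
    (hD : ∀ y ∈ D, mrank r M' y < mrank r M y) :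
    (∑ y ∈ D, w y ≤ w b) ∧ (mrank r M' b ≤ mrank r M b → ∑ y ∈ D, w y ≤ 0) := by
  classical
  have hsat := hpop.2 M' hM'
  unfold MorePopular satisfaction at hsat
  push Not at hsat
  have h1 : ∑ y ∈ D, w y ≤ ∑ x, if mrank r M' x < mrank r M x then w x else 0 := by
    calc ∑ y ∈ D, w y = ∑ y ∈ D, if mrank r M' y < mrank r M y then w y else 0 :=
          Finset.sum_congr rfl fun y hy => by rw [if_pos (hD y hy)]
      _ ≤ _ := Finset.sum_le_univ_sum_of_nonneg fun y => by
          split_ifs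
          · exact (hpos y).le
          · exact le_rfl
  have h2 : (∑ x, if mrank r M x < mrank r M' x then w x else 0)
      = if mrank r M b < mrank r M' b then w b else 0 := by
    refine Finset.sum_eq_single b (fun y _ hy => if_neg (not_lt.mpr (hweak y hy))) ?_
    intro h
    exact absurd (Finset.mem_univ b) h
  have h3 : (∑ y ∈ D, w y) ≤ if mrank r M b < mrank r M' b then w b else 0 := by
    rw [← h2]
    convert le_trans h1 (sub_nonpos.mp hsat) using 1
  constructor
  · refine h3.trans ?_
    split_ifs
    · exact le_rfl
    · exact (hpos b).le
  · intro h
    rwa [if_neg (not_lt.mpr h)] at h3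

variable {r : A → J → ℕ∞} {w : A → ℚ} {M : A → Option J}

lemma no_strict_cycle (hpop : Popular r w M) (hpos : ∀ x, 0 < w x) {y y' : A}
    (hs : Strict r M y y') (hw : Relation.ReflTransGen (Weak r M) y' y) : False := by
  classical
  obtain ⟨L, π, hL⟩ := exists_pathPerm hw
  obtain ⟨h1, h2, h3, h4, h5⟩ := hL.spec
  obtain ⟨p, hp, hlt⟩ := hs
  have hm : IsMatching r (shift M π y (M y')) := by
    refine shift_isMatching hpop.1 ?_ h4
    intro q hq
    rw [hp] at hq
    cases hq
    refine ⟨lt_of_lt_of_le hlt le_top, fun v hv => ?_⟩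
    rw [h1]
    exact hpop.1.2 v y' p hv hp
  have hlt' : mrank r (shift M π y (M y')) y < mrank r M y := by
    conv_lhs => rw [mrank, shift_self, hp]
    exact hlt
  have := (hpop.sum_le hpos hm y (fun v hv => shift_weak hv (h4 v hv)) {y}
    (by simpa using hlt')).2 hlt'.le
  rw [Finset.sum_singleton] at this
  exact absurd this (not_le.mpr (hpos y))

lemma SPlus.not_weak (hpop : Popular r w M) (hpos : ∀ x, 0 < w x) {y z : A}
    (hs : SPlus r M y z) (hw : Relation.ReflTransGen (Weak r M) z y) : False := by
  obtain ⟨y', h1, h2⟩ := hs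
  exact no_strict_cycle hpop hpos h1 (h2.trans hw)

/-- A simple path witnessing `SPlus r M x z`, with the permutation that shifts along it. -/
lemma SPlus.exists_perm (hpop : Popular r w M) (hpos : ∀ x, 0 < w x) {x z : A}
    (hs : SPlus r M x z) : ∃ (L : Finset A) (π : Equiv.Perm A), π z = x ∧ x ≠ z ∧ z ∈ L ∧
      (∀ y, y ∉ L → π y = y) ∧ (∀ y, y ≠ z → π y = y ∨ Weak r M y (π y)) ∧
      Strict r M x (π x) ∧
      ∀ v ∈ L, (v ≠ x → SPlus r M x v) ∧ Relation.ReflTransGen (Weak r M) v z := by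
  classical
  obtain ⟨x', h1, h2⟩ := hs
  obtain ⟨L, π, hL⟩ := exists_pathPerm h2
  obtain ⟨_, hz, _, _, h5⟩ := hL.spec
  have hx : x ∉ L := fun h => no_strict_cycle hpop hpos h1 (h5 x h).1
  have hxz : x ≠ z := fun e => hx (e ▸ hz)
  have h' := (PathPerm.cons hx h1.weak hL).spec
  refine ⟨_, _, h'.1, hxz, h'.2.1, h'.2.2.1, h'.2.2.2.1, ?_, ?_⟩
  · rw [Equiv.Perm.mul_apply, Equiv.swap_apply_left, hL.spec.1]
    exact h1
  · intro v hv
    refine ⟨fun hvx => ⟨x', h1, ?_⟩, (h'.2.2.2.2 v hv).2⟩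
    rcases Finset.mem_insert.mp hv with h | h
    · exact absurd h hvx
    · exact (h5 v h).1

lemma SPlus.weight_le (hpop : Popular r w M) (hpos : ∀ x, 0 < w x) {z b : A}
    (hs : SPlus r M z b) : w z ≤ w b := by
  obtain ⟨L, π, h1, h2, h3, h4, h5, h6, h7⟩ := hs.exists_perm hpop hpos
  have hm : IsMatching r (shift M π b none) :=
    shift_isMatching hpop.1 (by simp) h5
  have := (hpop.sum_le hpos hm b (fun v hv => shift_weak hv (h5 v hv)) {z}
    (by simpa using shift_strict h2 h6)).1
  rwa [Finset.sum_singleton] at this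

lemma SPlus.no_double (hpop : Popular r w M) (hpos : ∀ x, 0 < w x) {x z b : A}
    (hxz : SPlus r M x z) (hzb : SPlus r M z b) (hle : w b ≤ w z) : False := by
  classical
  obtain ⟨L₁, π₁, a1, a2, a3, a4, a5, a6, a7⟩ := hxz.exists_perm hpop hpos
  obtain ⟨L₂, π₂, b1, b2, b3, b4, b5, b6, b7⟩ := hzb.exists_perm hpop hpos
  -- The two paths share only the vertex `z`.
  have hdisj : ∀ v, v ∈ L₁ → v ∈ L₂ → v = z := by
    intro v h1 h2
    by_contra hne
    exact ((b7 v h2).1 hne).not_weak hpop hpos (a7 v h1).2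
  have hb₁ : b ∉ L₁ := fun h => b2 (hdisj b h b3).symm
  have hx₂ : x ∉ L₂ := by
    intro h
    have hw : Relation.ReflTransGen (Weak r M) z x := by
      obtain ⟨c, hc, hcx⟩ := (b7 x h).1 a2
      exact hcx.head hc.weak
    exact hxz.not_weak hpop hpos hw
  have hxb : x ≠ b := fun e => hx₂ (e ▸ b3)
  have hmem : ∀ y, y ∈ L₂ → π₂ y ∈ L₂ := by
    intro y hy
    by_contra h
    have := π₂.injective (b4 _ h)
    exact h (by rw [this]; exact hy)
  have hcomp₂ : ∀ y, y ∈ L₂ → y ≠ b → (π₁ * π₂) y = π₂ y := by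
    intro y hy hyb
    rw [Equiv.Perm.mul_apply]
    refine a4 _ fun h => hyb (π₂.injective ?_)
    rw [hdisj _ h (hmem y hy), b1]
  have hcomp₁ : ∀ y, y ∉ L₂ → (π₁ * π₂) y = π₁ y := by
    intro y hy
    rw [Equiv.Perm.mul_apply, b4 y hy]
  have hweak : ∀ y, y ≠ b → (π₁ * π₂) y = y ∨ Weak r M y ((π₁ * π₂) y) := by
    intro y hyb
    by_cases hy : y ∈ L₂
    · rw [hcomp₂ y hy hyb]
      exact b5 y hyb
    · rw [hcomp₁ y hy]
      by_cases hyz : y = z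
      · subst hyz
        -- `z` lies on the second path, being fixed by `π₂` otherwise.
        exact absurd (π₂.injective ((b4 y hy).trans b1.symm)) hyb
      · exact a5 y hyz
  have hz₂ : z ∈ L₂ := by
    by_contra h
    exact b2 (π₂.injective ((b4 z h).trans b1.symm))
  have hm : IsMatching r (shift M (π₁ * π₂) b none) :=
    shift_isMatching hpop.1 (by simp) hweak
  have hsum := (hpop.sum_le hpos hm b (fun v hv => shift_weak hv (hweak v hv)) {x, z} (by
    intro y hy
    rw [Finset.mem_insert, Finset.mem_singleton] at hy
    rcases hy with rfl | rfl
    · refine shift_strict hxb ?_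
      rw [hcomp₁ _ hx₂]
      exact a6
    · refine shift_strict b2 ?_
      rw [hcomp₂ _ hz₂ b2]
      exact b6)).1
  rw [Finset.sum_pair a2] at hsum
  linarith [hpos x]

lemma StrictReach.not_free (hpop : Popular r w M) (hpos : ∀ x, 0 < w x) {z : A} {q : J}
    (h : StrictReach r M z q) : ∃ b, M b = some q := by
  by_contra hfree
  push Not at hfree
  rcases h with h | ⟨b, hs, hlt, hle⟩
  · have hm : IsMatching r (shift M 1 z (some q)) := by
      refine shift_isMatching hpop.1 ?_ (fun y _ => Or.inl rfl)
      intro q' hq'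
      cases hq'
      exact ⟨lt_of_lt_of_le h le_top, fun y hy => absurd hy (hfree y)⟩
    have hlt : mrank r (shift M 1 z (some q)) z < mrank r M z := by
      conv_lhs => rw [mrank, shift_self]
      exact h
    have := (hpop.sum_le hpos hm z (fun v hv => shift_weak hv (Or.inl rfl)) {z}
      (by simpa using hlt)).2 hlt.le
    rw [Finset.sum_singleton] at this
    exact absurd this (not_le.mpr (hpos z))
  · obtain ⟨L, π, h1, h2, h3, h4, h5, h6, h7⟩ := hs.exists_perm hpop hpos
    have hm : IsMatching r (shift M π b (some q)) := by
      refine shift_isMatching hpop.1 ?_ h5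
      intro q' hq'
      cases hq'
      exact ⟨hlt, fun y hy => absurd hy (hfree y)⟩
    have hle' : mrank r (shift M π b (some q)) b ≤ mrank r M b := by
      conv_lhs => rw [mrank, shift_self]
      exact hle
    have := (hpop.sum_le hpos hm b (fun v hv => shift_weak hv (h5 v hv)) {z}
      (by simpa using shift_strict h2 h6)).2 hle'
    rw [Finset.sum_singleton] at this
    exact absurd this (not_le.mpr (hpos z))

end Shifting

/-! ### The graphs `G_i` and the restrictions of a popular matching -/

section Layers

variable {A J : Type*}

/-- `y` is matched by `M` to one of its first jobs. -/
def FMatched (f : A → Finset J) (M : A → Option J) (y : A) : Prop :=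
  ∃ p ∈ f y, M y = some p

open Classical in
/-- The part of `M` lying in `G_i`. -/
noncomputable def restr (cat : A → ℕ) (f : A → Finset J) (M : A → Option J) (i : ℕ) :
    A → Option J :=
  fun y => if cat y ≤ i ∧ FMatched f M y then M y else none

variable {r : A → J → ℕ∞} {cat : A → ℕ} {f : A → Finset J} {M : A → Option J}

lemma restr_eq_some {i : ℕ} {y : A} {p : J} :
    restr cat f M i y = some p ↔ cat y ≤ i ∧ p ∈ f y ∧ M y = some p := by
  unfold restr
  split_ifs with h
  · obtain ⟨h1, q, hq, h2⟩ := h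
    constructor
    · intro h3
      rw [h2] at h3
      cases h3
      exact ⟨h1, hq, h2⟩
    · exact fun h3 => h3.2.2
  · constructor
    · intro h'
      cases h'
    · exact fun h' => absurd ⟨h'.1, p, h'.2⟩ h

lemma restr_isMatchingOn (hM : IsMatching r M) (i : ℕ) :
    IsMatchingOn (Gedge cat f i) (restr cat f M i) := by
  constructor
  · intro x p hx
    have h := restr_eq_some.mp hx
    exact ⟨h.1, h.2.1⟩
  · intro x y p hx hy
    exact hM.2 x y p (restr_eq_some.mp hx).2.2 (restr_eq_some.mp hy).2.2

variable [Fintype A]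

/-- `f y` consists of the best jobs on the list of `y` that are critical in no lower graph. -/
def IsFirst (r : A → J → ℕ∞) (cat : A → ℕ) (f : A → Finset J) : Prop :=
  ∀ x p, p ∈ f x ↔
    r x p < ⊤ ∧ (∀ j < cat x, ¬ CriticalJob (Gedge cat f j) p) ∧
    ∀ q, r x q < ⊤ → (∀ j < cat x, ¬ CriticalJob (Gedge cat f j) q) → r x p ≤ r x q

lemma IsFirst.rank_eq (hf : IsFirst r cat f) {y : A} {p q : J} (hp : p ∈ f y) (hq : q ∈ f y) :
    r y p = r y q := by
  rw [hf] at hp hq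
  exact le_antisymm (hp.2.2 q hq.1 hq.2.1) (hq.2.2 p hp.1 hp.2.1)

lemma IsFirst.weak_of_alt (hf : IsFirst r cat f) {i : ℕ} {y y' : A} (hy : FMatched f M y)
    (h : Alt (Gedge cat f i) (restr cat f M i) y y') : Weak r M y y' ∧ FMatched f M y' := by
  obtain ⟨p, hp, hyp⟩ := h
  obtain ⟨m, hm, hym⟩ := hy
  obtain ⟨_, h1, h2⟩ := restr_eq_some.mp hp
  refine ⟨⟨p, h2, ((hf y p).mp hyp.2).1, ?_⟩, p, h1, h2⟩
  rw [mrank, hym]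
  exact (hf.rank_eq hyp.2 hm).le

lemma IsFirst.weak_path_of_alt (hf : IsFirst r cat f) {i : ℕ} {y y' : A} (hy : FMatched f M y)
    (h : Relation.ReflTransGen (Alt (Gedge cat f i) (restr cat f M i)) y y') :
    Relation.ReflTransGen (Weak r M) y y' ∧ FMatched f M y' := by
  induction h with
  | refl => exact ⟨.refl, hy⟩
  | tail _ h ih =>
    obtain ⟨h1, h2⟩ := hf.weak_of_alt ih.2 h
    exact ⟨ih.1.tail h1, h2⟩

/-- An applicant that strictly improves by taking `p` also reaches the jobs at the ends of the
alternating paths that start at `p`. -/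
lemma IsFirst.strictReach (hf : IsFirst r cat f) {i : ℕ} {z y y' : A} {p q : J}
    (hz : r z p < mrank r M z) (hy : restr cat f M i y = some p)
    (h : Relation.ReflTransGen (Alt (Gedge cat f i) (restr cat f M i)) y y')
    (hq : Gedge cat f i y' q) : StrictReach r M z q := by
  obtain ⟨_, h1, h2⟩ := restr_eq_some.mp hy
  obtain ⟨h3, m, hm, h4⟩ := hf.weak_path_of_alt ⟨p, h1, h2⟩ h
  refine Or.inr ⟨y', ⟨y, ⟨p, h2, hz⟩, h3⟩, ((hf y' q).mp hq.2).1, ?_⟩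
  rw [mrank, h4]
  exact (hf.rank_eq hq.2 hm).le

lemma IsFirst.exists_strictReach (hf : IsFirst r cat f) (hM : IsMatching r M) {i : ℕ} {z : A}
    {p : J} (hz : r z p < mrank r M z) (hp : ¬ CriticalJob (Gedge cat f i) p) :
    ∃ q, StrictReach r M z q ∧ ∀ v, restr cat f M i v ≠ some q := by
  rcases exists_alt_of_not_critical (restr_isMatchingOn hM i) hp with h |
    ⟨y, y', q, h1, h2, h3, h4⟩
  · exact ⟨p, Or.inl hz, h⟩
  · exact ⟨q, hf.strictReach hz h1 h2 h3, h4⟩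

/-- A critical job of `G_j` is held by an applicant of category at most `j` matched into its
first set, as soon as `M` restricts to a maximum matching of `G_j`. -/
lemma not_critical_of_matched (hM : IsMatching r M) {j : ℕ} {x : A} {p : J}
    (hmax : IsMaxMatchingOn (Gedge cat f j) (restr cat f M j))
    (hx : M x = some p) (h : ¬ (cat x ≤ j ∧ FMatched f M x)) :
    ¬ CriticalJob (Gedge cat f j) p := by
  intro hc
  obtain ⟨y, hy⟩ := hc _ hmax
  obtain ⟨h1, h2, h3⟩ := restr_eq_some.mp hy
  obtain rfl := hM.2 x y p hx h3
  exact h ⟨h1, p, h2, hx⟩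

/-- A job that only `x` may hold is not critical in `G_j` unless `x` is matched into `f x`. -/
lemma not_critical_of_private (hM : IsMatching r M) {j : ℕ} {x : A} {p : J}
    (hmax : IsMaxMatchingOn (Gedge cat f j) (restr cat f M j))
    (hp : ∀ y, r y p < ⊤ → y = x) (h : ¬ (cat x ≤ j ∧ FMatched f M x)) :
    ¬ CriticalJob (Gedge cat f j) p := by
  intro hc
  obtain ⟨y, hy⟩ := hc _ hmax
  obtain ⟨h1, h2, h3⟩ := restr_eq_some.mp hy
  obtain rfl := hp y (hM.1 y p h3)
  exact h ⟨h1, p, h2, h3⟩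

lemma IsFirst.strict_of_not_fMatched (hf : IsFirst r cat f) (hM : IsMatching r M) {x : A}
    (hmax : ∀ j < cat x, IsMaxMatchingOn (Gedge cat f j) (restr cat f M j))
    (hx : ¬ FMatched f M x) {p : J} (hp : p ∈ f x) : r x p < mrank r M x := by
  have hp' := (hf x p).mp hp
  cases hm : M x with
  | none =>
    rw [mrank, hm]
    exact hp'.1
  | some m =>
    have hnc : ∀ j < cat x, ¬ CriticalJob (Gedge cat f j) m := fun j hj =>
      not_critical_of_matched hM (hmax j hj) hm (fun h => hx h.2)
    rw [mrank, hm]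
    refine lt_of_le_of_ne (hp'.2.2 m (hM.1 x m hm) hnc) fun he => hx ⟨m, ?_, hm⟩
    refine (hf x m).mpr ⟨hM.1 x m hm, hnc, fun q hq hqc => ?_⟩
    have := hp'.2.2 q hq hqc
    rw [he] at this
    exact this

lemma IsFirst.nonempty [Fintype J] (hf : IsFirst r cat f) (hM : IsMatching r M) {x : A} {l : J}
    (hl : r x l < ⊤) (hl' : ∀ y, r y l < ⊤ → y = x)
    (hmax : ∀ j < cat x, IsMaxMatchingOn (Gedge cat f j) (restr cat f M j)) :
    ∃ p, p ∈ f x := by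
  classical
  let T : Finset J := Finset.univ.filter fun p =>
    r x p < ⊤ ∧ ∀ j < cat x, ¬ CriticalJob (Gedge cat f j) p
  have hT : T.Nonempty := by
    refine ⟨l, ?_⟩
    simp only [T, Finset.mem_filter, Finset.mem_univ, true_and]
    exact ⟨hl, fun j hj => not_critical_of_private hM (hmax j hj) hl'
      (fun h => absurd h.1 (not_le.mpr hj))⟩
  obtain ⟨p, hp, hmin⟩ := Finset.exists_min_image T (r x) hT
  simp only [T, Finset.mem_filter, Finset.mem_univ, true_and] at hp hmin
  exact ⟨p, (hf x p).mpr ⟨hp.1, hp.2, fun q h1 h2 => hmin q ⟨h1, h2⟩⟩⟩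

variable {w : A → ℚ}

/-- Two strict steps in a row, made by `x` and by an applicant `z` outside its first set, lead to
ever lower categories and hence to a contradiction with popularity. -/
lemma not_sPlus_of_not_fMatched [Fintype J] {l : A → J} (hf : IsFirst r cat f)
    (hpop : Popular r w M) (hpos : ∀ x, 0 < w x)
    (hanti : ∀ x y, cat x ≤ cat y → w y ≤ w x) (hcat : ∀ x, 1 ≤ cat x)
    (hl : ∀ x, r x (l x) < ⊤) (hl' : ∀ x y, r y (l x) < ⊤ → y = x) :
    ∀ (n : ℕ) (x z : A), cat z = n →
      (∀ j < cat z, IsMaxMatchingOn (Gedge cat f j) (restr cat f M j)) →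
      ¬ FMatched f M z → ¬ SPlus r M x z := by
  intro n
  induction n using Nat.strong_induction_on with
  | _ n ih =>
    intro x z hn hmax hz hs
    obtain ⟨p, hp⟩ := hf.nonempty hpop.1 (hl z) (hl' z) hmax
    have hlt := hf.strict_of_not_fMatched hpop.1 hmax hz hp
    have hc := hcat z
    obtain ⟨q, hq, hfree⟩ := hf.exists_strictReach hpop.1 (i := cat z - 1) hlt
      (((hf z p).mp hp).2.1 _ (by omega))
    obtain ⟨b, hb⟩ := hq.not_free hpop hpos
    have hzb := hq.sPlus hb
    by_cases hcb : cat z ≤ cat b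
    · exact hs.no_double hpop hpos hzb (hanti z b hcb)
    · refine ih (cat b) (by omega) z b rfl (fun j hj => hmax j (by omega)) ?_ hzb
      rintro ⟨m, hm, hbm⟩
      rw [hb] at hbm
      cases hbm
      exact hfree b (restr_eq_some.mpr ⟨by omega, hm, hb⟩)

/-- A popular matching restricts to a maximum matching of every `G_i`. -/
lemma restr_isMax [Fintype J] {l : A → J} (hf : IsFirst r cat f)
    (hpop : Popular r w M) (hpos : ∀ x, 0 < w x)
    (hanti : ∀ x y, cat x ≤ cat y → w y ≤ w x) (hstrict : ∀ x y, cat x < cat y → w y < w x)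
    (hcat : ∀ x, 1 ≤ cat x)
    (hl : ∀ x, r x (l x) < ⊤) (hl' : ∀ x y, r y (l x) < ⊤ → y = x) (i : ℕ) :
    IsMaxMatchingOn (Gedge cat f i) (restr cat f M i) := by
  induction i using Nat.strong_induction_on with
  | _ i ih =>
    refine isMax_of_no_augmenting (restr_isMatchingOn hpop.1 i) ?_
    intro u y q hu huy hq
    by_contra hfree
    push Not at hfree
    -- Applicants of category above `i` have no edge, so an augmenting path starts in `G_i`.
    have hcu : cat u ≤ i := by
      rcases Relation.ReflTransGen.cases_head huy with rfl | ⟨v, ⟨p, _, hp⟩, _⟩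
      · exact hq.1
      · exact hp.1
    have huF : ¬ FMatched f M u := by
      rintro ⟨p, hp, hup⟩
      rw [restr_eq_some.mpr ⟨hcu, hp, hup⟩] at hu
      cases hu
    have hsr : StrictReach r M u q := by
      rcases Relation.ReflTransGen.cases_head huy with rfl | ⟨v, ⟨p, hv, hp⟩, hvy⟩
      · exact Or.inl (hf.strict_of_not_fMatched hpop.1 (fun j hj => ih j (by omega)) huF hq.2)
      · exact hf.strictReach (hf.strict_of_not_fMatched hpop.1 (fun j hj => ih j (by omega))
          huF hp.2) hv hvy hq
    obtain ⟨b, hb⟩ := hsr.not_free hpop hpos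
    have hub := hsr.sPlus hb
    by_cases hcb : cat b ≤ i
    · refine not_sPlus_of_not_fMatched hf hpop hpos hanti hcat hl hl' (cat b) u b rfl
        (fun j hj => ih j (by omega)) ?_ hub
      rintro ⟨m, hm, hbm⟩
      rw [hb] at hbm
      cases hbm
      exact hfree b (restr_eq_some.mpr ⟨hcb, hm, hb⟩)
    · exact absurd (hub.weight_le hpop hpos) (not_le.mpr (hstrict u b (by omega)))

end Layers

/-- With ties, in a popular matching every applicant `x` is matched
to a job in `f x ∪ s x`. -/
theorem popular_matched_in_first_or_second_set
    {A J : Type*} [Fintype A] [Fintype J] [DecidableEq J]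
    (k : ℕ) (r : A → J → ℕ∞) (cat : A → ℕ) (wt : ℕ → ℚ)
    (f : A → Finset J) (s : A → Finset J) (l : A → J)
    (hcat : ∀ x, 1 ≤ cat x ∧ cat x ≤ k)
    (hw : ∀ i j, 1 ≤ i → i < j → j ≤ k → wt j < wt i)
    (hwpos : ∀ i, 1 ≤ i → i ≤ k → 0 < wt i)
    (hlast : ∀ x, r x (l x) < ⊤ ∧ (∀ p, r x p < ⊤ → p ≠ l x → r x p < r x (l x)) ∧
      ∀ y, r y (l x) < ⊤ → y = x)
    (hfirst : ∀ x p, p ∈ f x ↔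
      r x p < ⊤ ∧ (∀ j < cat x, ¬ CriticalJob (Gedge cat f j) p) ∧
      ∀ q, r x q < ⊤ → (∀ j < cat x, ¬ CriticalJob (Gedge cat f j) q) → r x p ≤ r x q)
    (hsecond : ∀ x,
      (CriticalApp (Gedge cat f (cat x)) x → s x = ∅) ∧
      (¬ CriticalApp (Gedge cat f (cat x)) x → ∀ p, p ∈ s x ↔
        r x p < ⊤ ∧ (∀ j ≤ cat x, ¬ CriticalJob (Gedge cat f j) p) ∧
        ∀ q, r x q < ⊤ → (∀ j ≤ cat x, ¬ CriticalJob (Gedge cat f j) q) → r x p ≤ r x q))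
    (M : A → Option J) (hpop : Popular r (fun z => wt (cat z)) M) :
    ∀ x, ∃ p, M x = some p ∧ (p ∈ f x ∨ p ∈ s x) := by
  have hf : IsFirst r cat f := hfirst
  have hpos : ∀ x, 0 < (fun z => wt (cat z)) x := fun x => hwpos _ (hcat x).1 (hcat x).2
  have hstrict : ∀ x y, cat x < cat y → (fun z => wt (cat z)) y < (fun z => wt (cat z)) x :=
    fun x y h => hw _ _ (hcat x).1 h (hcat y).2
  have hanti : ∀ x y, cat x ≤ cat y → (fun z => wt (cat z)) y ≤ (fun z => wt (cat z)) x := by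
    intro x y h
    rcases h.lt_or_eq with h | h
    · exact (hstrict x y h).le
    · exact (congrArg wt h).ge
  have hl : ∀ x, r x (l x) < ⊤ := fun x => (hlast x).1
  have hl' : ∀ x y, r y (l x) < ⊤ → y = x := fun x => (hlast x).2.2
  have hmax := restr_isMax hf hpop hpos hanti hstrict (fun x => (hcat x).1) hl hl'
  intro x
  by_cases hx : FMatched f M x
  · obtain ⟨p, hp, hm⟩ := hx
    exact ⟨p, hm, Or.inl hp⟩
  have hnc : ¬ CriticalApp (Gedge cat f (cat x)) x := by
    intro h
    obtain ⟨p, hp⟩ := Option.isSome_iff_exists.mp (h _ (hmax (cat x)))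
    exact hx ⟨p, (restr_eq_some.mp hp).2⟩
  have hs := (hsecond x).2 hnc
  have key : ∀ p, r x p < mrank r M x → ¬ CriticalJob (Gedge cat f (cat x)) p → False := by
    intro p hlt hp
    obtain ⟨q, hq, hfree⟩ := hf.exists_strictReach hpop.1 hlt hp
    obtain ⟨b, hb⟩ := hq.not_free hpop hpos
    have hxb := hq.sPlus hb
    by_cases hcb : cat b ≤ cat x
    · refine not_sPlus_of_not_fMatched hf hpop hpos hanti (fun x => (hcat x).1) hl hl'
        (cat b) x b rfl (fun j _ => hmax j) ?_ hxb
      rintro ⟨m, hm, hbm⟩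
      rw [hb] at hbm
      cases hbm
      exact hfree b (restr_eq_some.mpr ⟨hcb, hm, hb⟩)
    · exact absurd (hxb.weight_le hpop hpos) (not_le.mpr (hstrict x b (by omega)))
  cases hm : M x with
  | none =>
    refine absurd (key (l x) ?_ (not_critical_of_private hpop.1 (hmax _) (hl' x)
      (fun h => hx h.2))) id
    rw [mrank, hm]
    exact hl x
  | some m =>
    refine ⟨m, rfl, Or.inr ((hs m).mpr ⟨hpop.1.1 x m hm, fun j _ =>
      not_critical_of_matched hpop.1 (hmax j) hm (fun h => hx h.2), fun q _ hqc => ?_⟩)⟩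
    by_contra hlt
    refine key q ?_ (hqc _ le_rfl)
    rw [mrank, hm]
    exact not_le.mp hlt
end

section
/- With preference lists that may contain ties, for every applicant x ∈ C_i, the last-resort job l(x) is critical in G_i if and only if f(x) = {l(x)}. -/
theorem exists_isMaxMatchingOn {A J : Type*} [Fintype A] (E : A → J → Prop) :
    ∃ M, IsMaxMatchingOn E M := by
  let sizes : Set ℕ := {n | ∃ M, IsMatchingOn E M ∧ msize M = n}
  have hne : sizes.Nonempty := ⟨_, fun _ => none, ⟨by simp, by simp⟩, rfl⟩
  have hbdd : BddAbove sizes := by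
    refine ⟨Fintype.card A, ?_⟩
    rintro n ⟨M, -, rfl⟩
    exact Finset.card_le_univ _
  obtain ⟨M, hM, hs⟩ := Nat.sSup_mem hne hbdd
  exact ⟨M, hM, fun M' hM' => hs ▸ le_csSup hbdd ⟨M', hM', rfl⟩⟩

theorem msize_lt_msize_update {A J : Type*} [Fintype A] [DecidableEq A]
    (M : A → Option J) (x : A) (p : J) (hx : M x = none) :
    msize M < msize (Function.update M x (some p)) := by
  refine Finset.card_lt_card (Finset.ssubset_iff_of_subset ?_ |>.2 ⟨x, by simp, by simp [hx]⟩)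
  intro y hy
  by_cases h : y = x <;> simp_all [Function.update_apply]

theorem IsMatchingOn.update {A J : Type*} [DecidableEq A] {E : A → J → Prop}
    {M : A → Option J} (hM : IsMatchingOn E M) {x : A} {p : J} (hE : E x p)
    (hp : ∀ y, M y ≠ some p) : IsMatchingOn E (Function.update M x (some p)) := by
  constructor
  · intro y q h
    by_cases hy : y = x
    · subst hy
      simp_all
    · exact hM.1 y q (by simpa [hy] using h)
  · intro y z q h1 h2
    by_cases hy : y = x <;> by_cases hz : z = x
    · rw [hy, hz]
    · simp_all
    · simp_all
    · exact hM.2 y z q (by simpa [hy] using h1) (by simpa [hz] using h2)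

/-- With ties, for every applicant `x ∈ C_i` the last-resort job
`l x` is critical in `G_i` if and only if `f x = {l x}`. -/
theorem lastResort_critical_iff
    {A J : Type*} [Fintype A] [Fintype J] [DecidableEq J]
    (k : ℕ) (r : A → J → ℕ∞) (cat : A → ℕ) (wt : ℕ → ℚ)
    (f : A → Finset J) (l : A → J)
    (hcat : ∀ x, 1 ≤ cat x ∧ cat x ≤ k)
    (hw : ∀ i j, 1 ≤ i → i < j → j ≤ k → wt j < wt i)
    (hwpos : ∀ i, 1 ≤ i → i ≤ k → 0 < wt i)
    (hlast : ∀ x, r x (l x) < ⊤ ∧ (∀ p, r x p < ⊤ → p ≠ l x → r x p < r x (l x)) ∧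
      ∀ y, r y (l x) < ⊤ → y = x)
    (hfirst : ∀ x p, p ∈ f x ↔
      r x p < ⊤ ∧ (∀ j < cat x, ¬ CriticalJob (Gedge cat f j) p) ∧
      ∀ q, r x q < ⊤ → (∀ j < cat x, ¬ CriticalJob (Gedge cat f j) q) → r x p ≤ r x q)
    (x : A) :
    CriticalJob (Gedge cat f (cat x)) (l x) ↔ f x = {l x} := by
  classical
  constructor
  · intro hc
    obtain ⟨M, hM⟩ := exists_isMaxMatchingOn (Gedge cat f (cat x))
    obtain ⟨y, hy⟩ := hc M hM
    have hmem : l x ∈ f y := (hM.1.1 y _ hy).2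
    obtain rfl : y = x := (hlast x).2.2 y ((hfirst y _).1 hmem).1
    refine Finset.eq_singleton_iff_unique_mem.2 ⟨hmem, fun p hp => ?_⟩
    by_contra hne
    have hlt := (hlast y).2.1 p ((hfirst y p).1 hp).1 hne
    have hle := ((hfirst y _).1 hmem).2.2 p ((hfirst y p).1 hp).1 ((hfirst y p).1 hp).2.1
    exact absurd hlt hle.not_gt
  · intro hf M hM
    by_contra! hfree
    have hx : M x = none := by
      cases h : M x with
      | none => rfl
      | some p =>
        have hp : p ∈ f x := (hM.1.1 x p h).2
        rw [hf, Finset.mem_singleton] at hp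
        exact absurd (hp ▸ h) (hfree x)
    have hE : Gedge cat f (cat x) x (l x) := ⟨le_rfl, by simp [hf]⟩
    exact absurd (hM.2 _ (hM.1.update hE hfree)) (msize_lt_msize_update M x (l x) hx).not_ge
end
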